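/- Let j ∈ ℕ and let (u_k) be a sequence of piecewise constant functions on [0,1] with J(u_k) ≤ j for all k, converging in L¹[0,1] to some u ∈ L¹[0,1]. Then u has a piecewise constant representative, and J(u) ≤ j. -/

import Mathlib

open MeasureTheory Filter Set
open scoped ENNReal Classical

noncomputable section

/-- The Lebesgue measure restricted to `[0,1]`. -/
def mu01 : Measure ℝ := volume.restrict (Set.Icc (0:ℝ) 1)

/-- The step function determined by partition points `x` and values `a`. -/
def stepF {m : ℕ} (x : Fin (m + 1) → ℝ) (a : Fin m → ℝ) : ℝ → ℝ := fun t =>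
  ∑ l : Fin m, Set.indicator (Set.Ioo (x l.castSucc) (x l.succ)) (fun _ => a l) t

/-- `u` is a.e. on `[0,1]` represented by the step function with partition `x` and values `a`. -/
def IsPCRep (u : ℝ → ℝ) {m : ℕ} (x : Fin (m + 1) → ℝ) (a : Fin m → ℝ) : Prop :=
  StrictMono x ∧ x 0 = 0 ∧ x (Fin.last m) = 1 ∧ ∀ᵐ t ∂mu01, u t = stepF x a t

/-- `u` is piecewise constant on `[0,1]` (up to a.e. equality). -/
def IsPC (u : ℝ → ℝ) : Prop :=
  ∃ (m : ℕ) (x : Fin (m + 1) → ℝ) (a : Fin m → ℝ), IsPCRep u x a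

/-- The number of jumps `J(u)`: the minimal number of interior partition points over all
piecewise constant representations of `u`. -/
def jumps (u : ℝ → ℝ) : ℕ :=
  sInf {jj : ℕ | ∃ (x : Fin (jj + 2) → ℝ) (a : Fin (jj + 1) → ℝ), IsPCRep u x a}

/-- `u` is piecewise constant with all jump locations inside `S`. -/
def IsPCIn (u : ℝ → ℝ) (S : Set ℝ) : Prop :=
  ∃ (m : ℕ) (x : Fin (m + 1) → ℝ) (a : Fin m → ℝ), IsPCRep u x a ∧
    ∀ i : Fin (m + 1), i ≠ 0 → i ≠ Fin.last m → x i ∈ S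

/-- The `L¹[0,1]` distance of two functions. -/
def L1dist (u v : ℝ → ℝ) : ℝ := ∫ t, |u t - v t| ∂mu01

/-- The continuous `L¹`-Potts functional `P_γ` with data `f`. -/
def Potts (γ : ℝ) (f u : ℝ → ℝ) : ℝ≥0∞ :=
  if IsPC u then ENNReal.ofReal (γ * (jumps u : ℝ) + L1dist u f) else ⊤

/-- The (semi-)discrete `L¹`-Potts functional with data `f`, restricted to piecewise
constant functions whose jumps lie in `S`. -/
def PottsIn (γ : ℝ) (f : ℝ → ℝ) (S : Set ℝ) (u : ℝ → ℝ) : ℝ≥0∞ :=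
  if IsPCIn u S then ENNReal.ofReal (γ * (jumps u : ℝ) + L1dist u f) else ⊤

/-- A real level between the first and last terms of a finite sequence is crossed upwards
by two consecutive terms. -/
lemma exists_castSucc_le_lt_succ {m : ℕ} (x : Fin (m + 1) → ℝ) {t : ℝ} (h0 : x 0 ≤ t)
    (h1 : t < x (Fin.last m)) : ∃ l : Fin m, x l.castSucc ≤ t ∧ t < x l.succ := by
  by_contra! h
  exact absurd (Fin.induction (motive := fun i => x i ≤ t) h0 h (Fin.last m)) (not_le.2 h1)

lemma stepF_eq_of_mem {m : ℕ} {x : Fin (m + 1) → ℝ} (hx : StrictMono x) (a : Fin m → ℝ)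
    {l : Fin m} {t : ℝ} (ht : t ∈ Ioo (x l.castSucc) (x l.succ)) : stepF x a t = a l := by
  unfold stepF
  rw [Finset.sum_eq_single l, indicator_of_mem ht]
  · intro i _ hi
    apply indicator_of_notMem
    rintro ⟨h1, h2⟩
    rcases lt_or_gt_of_ne hi with h | h
    · have : x i.succ ≤ x l.castSucc := hx.monotone (by simpa [Fin.le_def] using h)
      linarith [ht.1]
    · have : x l.succ ≤ x i.castSucc := hx.monotone (by simpa [Fin.le_def] using h)
      linarith [ht.2]
  · simp

lemma ae_mem_Ioo_of_endpoints {m : ℕ} {x : Fin (m + 1) → ℝ}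
    (h0 : x 0 = 0) (h1 : x (Fin.last m) = 1) :
    ∀ᵐ t ∂mu01, ∃ l : Fin m, t ∈ Ioo (x l.castSucc) (x l.succ) := by
  have hne : ∀ᵐ t ∂mu01, t ∉ range x :=
    ae_restrict_of_ae (measure_eq_zero_iff_ae_notMem.1 ((finite_range x).measure_zero _))
  have hI : ∀ᵐ t ∂mu01, t ∈ Icc (0 : ℝ) 1 := ae_restrict_mem measurableSet_Icc
  filter_upwards [hne, hI] with t ht htI
  have hne' : ∀ i, x i ≠ t := fun i hi => ht ⟨i, hi⟩
  obtain ⟨l, hl, hl'⟩ := exists_castSucc_le_lt_succ x (t := t) (by rw [h0]; exact htI.1)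
    (lt_of_le_of_ne (by rw [h1]; exact htI.2) (hne' _).symm)
  exact ⟨l, lt_of_le_of_ne hl (hne' _), hl'⟩

lemma IsPCRep.ae_eq_of_mem {u : ℝ → ℝ} {m : ℕ} {x : Fin (m + 1) → ℝ} {a : Fin m → ℝ}
    (h : IsPCRep u x a) :
    ∀ᵐ t ∂mu01, ∀ l : Fin m, t ∈ Ioo (x l.castSucc) (x l.succ) → u t = a l := by
  filter_upwards [h.2.2.2] with t ht l hl
  rw [ht, stepF_eq_of_mem h.1 a hl]

lemma isPCRep_of_ae_eq {u : ℝ → ℝ} {m : ℕ} {x : Fin (m + 1) → ℝ} {a : Fin m → ℝ}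
    (hx : StrictMono x) (h0 : x 0 = 0) (h1 : x (Fin.last m) = 1)
    (h : ∀ᵐ t ∂mu01, ∀ l : Fin m, t ∈ Ioo (x l.castSucc) (x l.succ) → u t = a l) :
    IsPCRep u x a := by
  refine ⟨hx, h0, h1, ?_⟩
  filter_upwards [h, ae_mem_Ioo_of_endpoints h0 h1] with t ht ⟨l, hl⟩
  rw [ht l hl, stepF_eq_of_mem hx a hl]

lemma IsPC.integrable {u : ℝ → ℝ} (h : IsPC u) : Integrable u mu01 := by
  obtain ⟨m, x, a, -, -, -, hu⟩ := h
  have : IsFiniteMeasure mu01 := by unfold mu01; infer_instance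
  refine Integrable.congr ?_ (EventuallyEq.symm hu)
  unfold stepF
  exact integrable_finsetSum _ fun l _ => (integrable_const (a l)).indicator measurableSet_Ioo

lemma IsPC.exists_isPCRep_jumps {u : ℝ → ℝ} (h : IsPC u) :
    ∃ (x : Fin (jumps u + 2) → ℝ) (a : Fin (jumps u + 1) → ℝ), IsPCRep u x a := by
  obtain ⟨m, x, a, hu⟩ := h
  cases m with
  | zero => exact absurd (hu.2.1.symm.trans hu.2.2.1) zero_ne_one
  | succ n => exact Nat.sInf_mem (s := {jj : ℕ | ∃ (x : Fin (jj + 2) → ℝ)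
      (a : Fin (jj + 1) → ℝ), IsPCRep u x a}) ⟨n, x, a, hu⟩

/-- A piecewise constant function with at most `j` jumps is constant a.e. on each piece of a
partition of `[0,1]` with exactly `j` interior points, coincidences being allowed. -/
lemma IsPC.exists_partition_of_jumps_le {u : ℝ → ℝ} (h : IsPC u) {j : ℕ} (hj : jumps u ≤ j) :
    ∃ (y : Fin (j + 2) → ℝ) (b : Fin (j + 1) → ℝ),
      (∀ i, y i ∈ Icc (0 : ℝ) 1) ∧ y 0 = 0 ∧ y (Fin.last (j + 1)) = 1 ∧
      ∀ᵐ t ∂mu01, ∀ l : Fin (j + 1), t ∈ Ioo (y l.castSucc) (y l.succ) → u t = b l := by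
  obtain ⟨x, a, hu⟩ := h.exists_isPCRep_jumps
  obtain ⟨hx, h0, h1, -⟩ := id hu
  generalize jumps u = n at *
  refine ⟨fun i => x ⟨min i (n + 1), by omega⟩, fun l => a ⟨min l n, by omega⟩,
    fun i => ⟨?_, ?_⟩, ?_, ?_, ?_⟩
  · rw [← h0]; exact hx.monotone (Fin.zero_le _)
  · rw [← h1]; exact hx.monotone (Fin.le_last _)
  · rw [← h0]; congr 1
  · rw [← h1]
    exact congrArg x (Fin.ext (by simp; omega))
  · filter_upwards [hu.ae_eq_of_mem] with t ht l hl
    by_cases hln : (l : ℕ) ≤ n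
    · apply ht
      convert hl using 3
      · ext; simp; omega
      · ext; simp
    · exfalso
      have he : (⟨min (l.castSucc : ℕ) (n + 1), by omega⟩ : Fin (n + 2))
          = ⟨min (l.succ : ℕ) (n + 1), by omega⟩ := by ext; simp; omega
      rw [he] at hl
      exact lt_irrefl _ (hl.1.trans hl.2)

/-- A function which is a.e. constant on each piece of a partition of `[0,1]` with `j` interior
points, in arbitrary order and possibly repeated, is piecewise constant with at most `j` jumps. -/
lemma isPC_and_jumps_le_of_partition {u : ℝ → ℝ} {j : ℕ} (y : Fin (j + 2) → ℝ)
    (b : Fin (j + 1) → ℝ) (hy : ∀ i, y i ∈ Icc (0 : ℝ) 1) (h0 : y 0 = 0)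
    (h1 : y (Fin.last (j + 1)) = 1)
    (hu : ∀ᵐ t ∂mu01, ∀ l : Fin (j + 1), t ∈ Ioo (y l.castSucc) (y l.succ) → u t = b l) :
    IsPC u ∧ jumps u ≤ j := by
  set F : Finset ℝ := Finset.univ.image y
  have hmem : ∀ i, y i ∈ F := fun i => Finset.mem_image_of_mem y (Finset.mem_univ i)
  have h0F : (0 : ℝ) ∈ F := h0 ▸ hmem 0
  have h1F : (1 : ℝ) ∈ F := h1 ▸ hmem _
  have hFI : ∀ r ∈ F, r ∈ Icc (0 : ℝ) 1 := by
    intro r hr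
    obtain ⟨i, -, rfl⟩ := Finset.mem_image.1 hr
    exact hy i
  have hcard : F.card ≤ j + 2 := Finset.card_image_le.trans (by simp)
  have hcard' : 1 < F.card := Finset.one_lt_card.2 ⟨0, h0F, 1, h1F, zero_ne_one⟩
  obtain ⟨n, hn⟩ : ∃ n, F.card = n + 2 := ⟨F.card - 2, by omega⟩
  set x := F.orderEmbOfFin hn with hx
  have hxF : ∀ i, x i ∈ F := F.orderEmbOfFin_mem hn
  have hsurj : ∀ r ∈ F, ∃ i, x i = r := fun r hr => by
    have : r ∈ range x := by rw [hx, Finset.range_orderEmbOfFin]; exact hr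
    exact this
  have hx0 : x 0 = 0 := by
    obtain ⟨i, hi⟩ := hsurj 0 h0F
    exact le_antisymm (hi ▸ x.monotone (Fin.zero_le i)) (hFI _ (hxF 0)).1
  have hx1 : x (Fin.last (n + 1)) = 1 := by
    obtain ⟨i, hi⟩ := hsurj 1 h1F
    exact le_antisymm (hFI _ (hxF _)).2 (hi ▸ x.monotone (Fin.le_last i))
  have hpiece : ∀ l : Fin (n + 1), ∃ i : Fin (j + 1),
      y i.castSucc ≤ x l.castSucc ∧ x l.succ ≤ y i.succ := by
    intro l
    have hlt : x l.castSucc < x l.succ := x.strictMono Fin.castSucc_lt_succ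
    obtain ⟨i, hi, hi'⟩ := exists_castSucc_le_lt_succ y (t := x l.castSucc)
      (by rw [h0]; exact (hFI _ (hxF _)).1)
      (by rw [h1]; exact hlt.trans_le (hFI _ (hxF _)).2)
    refine ⟨i, hi, ?_⟩
    obtain ⟨p, hp⟩ := hsurj _ (hmem i.succ)
    rw [← hp] at hi' ⊢
    exact x.monotone (Fin.castSucc_lt_iff_succ_le.1 (x.lt_iff_lt.1 hi'))
  choose g hg hg' using hpiece
  have hrep : IsPCRep u x (fun l => b (g l)) := by
    refine isPCRep_of_ae_eq x.strictMono hx0 hx1 ?_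
    filter_upwards [hu] with t ht l hl
    exact ht (g l) ⟨(hg l).trans_lt hl.1, hl.2.trans_le (hg' l)⟩
  have hjumps : jumps u ≤ n := Nat.sInf_le ⟨x, _, hrep⟩
  exact ⟨⟨n + 1, x, _, hrep⟩, by omega⟩

lemma exists_subseq_ae_tendsto_of_L1dist {v : ℕ → ℝ → ℝ} {u : ℝ → ℝ}
    (hv : ∀ k, Integrable (v k) mu01) (hu : Integrable u mu01)
    (h : Tendsto (fun k => L1dist (v k) u) atTop (nhds 0)) :
    ∃ ψ : ℕ → ℕ, StrictMono ψ ∧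
      ∀ᵐ t ∂mu01, Tendsto (fun k => v (ψ k) t) atTop (nhds (u t)) := by
  refine TendstoInMeasure.exists_seq_tendsto_ae (tendstoInMeasure_of_tendsto_eLpNorm one_ne_zero
    (fun k => (hv k).aestronglyMeasurable) hu.aestronglyMeasurable ?_)
  have he : ∀ k, eLpNorm (v k - u) 1 mu01 = ENNReal.ofReal (L1dist (v k) u) := by
    intro k
    rw [eLpNorm_one_eq_lintegral_enorm, ← ofReal_integral_norm_eq_lintegral_enorm ((hv k).sub hu)]
    rfl
  simp_rw [he]
  simpa using ENNReal.tendsto_ofReal h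

theorem statement_8
    (j : ℕ) (u : ℝ → ℝ) (hu : IntegrableOn u (Set.Icc 0 1))
    (useq : ℕ → ℝ → ℝ) (huseq : ∀ k, IsPC (useq k))
    (hj : ∀ k, jumps (useq k) ≤ j)
    (hconv : Tendsto (fun k => L1dist (useq k) u) atTop (nhds 0)) :
    IsPC u ∧ jumps u ≤ j := by
  choose y b hyI hy0 hy1 hyb using fun k => (huseq k).exists_partition_of_jumps_le (hj k)
  obtain ⟨z, hz, φ, hφ, hφz⟩ := (isCompact_univ_pi fun _ : Fin (j + 2) =>
    isCompact_Icc (a := (0 : ℝ)) (b := 1)).tendsto_subseq (x := y) fun k i _ => hyI k i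
  obtain ⟨ψ, hψ, hae⟩ := exists_subseq_ae_tendsto_of_L1dist (fun k => (huseq (φ k)).integrable) hu
    (hconv.comp hφ.tendsto_atTop)
  have hlim : ∀ i, Tendsto (fun k => y (φ (ψ k)) i) atTop (nhds (z i)) := fun i =>
    (tendsto_pi_nhds.1 hφz i).comp hψ.tendsto_atTop
  have hz0 : z 0 = 0 := tendsto_nhds_unique (hlim 0) (by simp [hy0])
  have hz1 : z (Fin.last (j + 1)) = 1 := tendsto_nhds_unique (hlim _) (by simp [hy1])
  let G : Set ℝ := {t | Tendsto (fun k => useq (φ (ψ k)) t) atTop (nhds (u t)) ∧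
    ∀ k, ∀ l : Fin (j + 1), t ∈ Ioo (y k l.castSucc) (y k l.succ) → useq k t = b k l}
  have hG : ∀ᵐ t ∂mu01, t ∈ G := hae.and (ae_all_iff.2 hyb)
  have hconst : ∀ l : Fin (j + 1), ∃ c, ∀ t ∈ G, t ∈ Ioo (z l.castSucc) (z l.succ) → u t = c := by
    intro l
    by_cases hne : ∃ s ∈ G, s ∈ Ioo (z l.castSucc) (z l.succ)
    · obtain ⟨s, hsG, hs⟩ := hne
      refine ⟨u s, fun t htG ht => tendsto_nhds_unique_of_eventuallyEq htG.1 hsG.1 ?_⟩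
      filter_upwards [(hlim l.castSucc).eventually_lt_const hs.1,
        (hlim l.castSucc).eventually_lt_const ht.1, (hlim l.succ).eventually_const_lt hs.2,
        (hlim l.succ).eventually_const_lt ht.2] with k h1 h2 h3 h4
      rw [htG.2 _ l ⟨h2, h4⟩, hsG.2 _ l ⟨h1, h3⟩]
    · exact ⟨0, fun t htG ht => absurd ⟨t, htG, ht⟩ hne⟩
  choose c hc using hconst
  refine isPC_and_jumps_le_of_partition z c (fun i => hz i (mem_univ i)) hz0 hz1 ?_
  filter_upwards [hG] with t ht l hl
  exact hc l t ht hl
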